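/- arXiv:math/9904136 — 2 statements merged into one kernel-verified Lean document; each statement's English description precedes it below -/
import Mathlib

section
/- Let f : ℝ^d → ℝ^d be continuously differentiable, let p be a stable hyperbolic fixed point of ẋ = f(x), i.e. f(p) = 0 and all eigenvalues of Df(p) have strictly negative real part, and let x(t) be a solution of ẋ = f(x) with x(t) → p as t → ∞. Then the transition matrix Φ(t,s) of the variational equation ẏ = Df(x(t)) y along x(t) satisfies an exponential bound: there exist constants C > 0 and μ > 0 such that ‖Φ(t,s)‖ ≤ C e^{−μ(t−s)} for all t ≥ s ≥ 0. -/
open scoped Topology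
open Set Filter

section
open scoped Matrix.Norms.Operator

lemma aux_exp_mulVec {d : ℕ} (A : Matrix (Fin d) (Fin d) ℂ) (v : Fin d → ℂ) (l : ℂ)
    (h : A.mulVec v = l • v) : (NormedSpace.exp A).mulVec v = Complex.exp l • v := by
  have h1 := NormedSpace.exp_series_hasSum_exp' (𝕂 := ℂ) A
  have h2 := NormedSpace.exp_series_hasSum_exp' (𝕂 := ℂ) l
  have hp : ∀ n : ℕ, (A ^ n).mulVec v = l ^ n • v := by
    intro n
    induction n with
    | zero => simp
    | succ n ih =>
      rw [pow_succ, ← Matrix.mulVec_mulVec, h, Matrix.mulVec_smul, ih, smul_smul, pow_succ]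
      rw [mul_comm]
  let L : Matrix (Fin d) (Fin d) ℂ →+ (Fin d → ℂ) :=
    { toFun := fun M => M.mulVec v
      map_zero' := by simp
      map_add' := fun M N => Matrix.add_mulVec M N v }
  have hL : Continuous L := by
    change Continuous (fun M : Matrix (Fin d) (Fin d) ℂ => M.mulVec v)
    fun_prop
  have h3 := h1.map L hL
  have h4 := h2.smul_const v
  have h5 : (L ∘ fun n : ℕ => ((n.factorial : ℂ)⁻¹) • A ^ n)
      = fun n : ℕ => (((n.factorial : ℂ)⁻¹) • l ^ n) • v := by
    funext n
    change Matrix.mulVec (((n.factorial : ℂ)⁻¹) • A ^ n) v = _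
    rw [Matrix.smul_mulVec, hp, smul_smul, smul_eq_mul]
  rw [h5] at h3
  have := h3.unique h4
  rw [← Complex.exp_eq_exp_ℂ] at this
  exact this

lemma aux_spec {d : ℕ} (A : Matrix (Fin d) (Fin d) ℂ)
    (h : ∀ μ ∈ spectrum ℂ A, μ.re < 0) :
    ∀ μ ∈ spectrum ℂ (NormedSpace.exp A), ‖μ‖ < 1 := by
  intro μ hμ
  rw [← Matrix.spectrum_toLin', ← Module.End.hasEigenvalue_iff_mem_spectrum] at hμ
  set B := Matrix.toLin' (NormedSpace.exp A) with hB
  set a := Matrix.toLin' A with ha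
  have hcomm : Commute A (NormedSpace.exp A) := (Commute.refl A).exp_right
  have hinv : ∀ w ∈ Module.End.eigenspace B μ, a w ∈ Module.End.eigenspace B μ := by
    intro w hw
    rw [Module.End.mem_eigenspace_iff] at hw ⊢
    simp only [hB, ha, Matrix.toLin'_apply, Matrix.mulVec_mulVec] at hw ⊢
    rw [← hcomm.eq, ← Matrix.mulVec_mulVec, hw, Matrix.mulVec_smul]
  have : Nontrivial (Module.End.eigenspace B μ) := Submodule.nontrivial_iff_ne_bot.2 hμ
  obtain ⟨l, hl⟩ := Module.End.exists_eigenvalue (a.restrict hinv)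
  obtain ⟨w, hw⟩ := hl.exists_hasEigenvector
  have hw1 : A.mulVec (w : Fin d → ℂ) = l • (w : Fin d → ℂ) := by
    have := congrArg Subtype.val hw.apply_eq_smul
    simpa [ha] using this
  have hw0 : (w : Fin d → ℂ) ≠ 0 := by
    simpa using hw.2
  have hls : l ∈ spectrum ℂ A := by
    rw [← Matrix.spectrum_toLin', ← Module.End.hasEigenvalue_iff_mem_spectrum]
    refine Module.End.hasEigenvalue_of_hasEigenvector (x := (w : Fin d → ℂ)) ⟨?_, hw0⟩
    rw [Module.End.mem_eigenspace_iff, Matrix.toLin'_apply, hw1]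
  have hBw := Module.End.mem_eigenspace_iff.1 w.2
  have hBw : Matrix.toLin' (NormedSpace.exp A) (w : Fin d → ℂ) = μ • (w : Fin d → ℂ) := hBw
  rw [Matrix.toLin'_apply, aux_exp_mulVec A _ l hw1] at hBw
  have : Complex.exp l = μ := smul_left_injective ℂ hw0 hBw
  rw [← this, Complex.norm_exp]
  exact Real.exp_zero ▸ Real.exp_lt_exp.2 (h l hls)

lemma aux_pow {d : ℕ} (B : Matrix (Fin d) (Fin d) ℂ)
    (h : ∀ μ ∈ spectrum ℂ B, ‖μ‖ < 1) : Tendsto (fun n : ℕ => B ^ n) atTop (𝓝 0) := by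
  rcases subsingleton_or_nontrivial (Matrix (Fin d) (Fin d) ℂ) with hs | hn
  · have : (fun n : ℕ => B ^ n) = fun _ => 0 := by
      funext n; exact Subsingleton.elim _ _
    rw [this]; exact tendsto_const_nhds
  have hr : spectralRadius ℂ B < ((1 : NNReal) : ENNReal) := by
    apply spectrum.spectralRadius_lt_of_forall_lt B
    intro k hk
    exact_mod_cast h k hk
  obtain ⟨r, hr1, hr2⟩ := ENNReal.lt_iff_exists_nnreal_btwn.1 hr
  have hr2' : r < 1 := by exact_mod_cast hr2
  have hG := spectrum.pow_nnnorm_pow_one_div_tendsto_nhds_spectralRadius B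
  have hev := hG.eventually (gt_mem_nhds hr1)
  refine tendsto_zero_iff_norm_tendsto_zero.2 ?_
  refine squeeze_zero' (g := fun n : ℕ => (r : ℝ) ^ n) (Eventually.of_forall fun n => norm_nonneg _) ?_
    (tendsto_pow_atTop_nhds_zero_of_lt_one r.2 hr2')
  filter_upwards [hev, eventually_gt_atTop 0] with n hn hn0
  have h1 : ((‖B ^ n‖₊ : ENNReal)) ≤ (r : ENNReal) ^ n := by
    have := ENNReal.rpow_le_rpow hn.le (z := n) (by positivity)
    rw [← ENNReal.rpow_mul, one_div, inv_mul_cancel₀ (by positivity), ENNReal.rpow_one,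
      ENNReal.rpow_natCast] at this
    exact this
  exact_mod_cast h1
end

open scoped Matrix.Norms.Operator in
lemma aux_real {d : ℕ} (A : Matrix (Fin d) (Fin d) ℝ)
    (h : ∀ μ ∈ spectrum ℂ (A.map (algebraMap ℝ ℂ)), μ.re < 0) :
    Tendsto (fun n : ℕ => NormedSpace.exp ((n : ℝ) • (Matrix.toEuclideanCLM (𝕜 := ℝ) A))) atTop (𝓝 0) := by
  have h1 := aux_pow _ (aux_spec _ h)
  let F : Matrix (Fin d) (Fin d) ℝ →+* Matrix (Fin d) (Fin d) ℂ := (algebraMap ℝ ℂ).mapMatrix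
  have hF : Continuous F := by
    change Continuous (fun M : Matrix (Fin d) (Fin d) ℝ => M.map (algebraMap ℝ ℂ))
    exact continuous_id.matrix_map Complex.continuous_ofReal
  have h2 : NormedSpace.exp (A.map (algebraMap ℝ ℂ)) = F (NormedSpace.exp A) :=
    (NormedSpace.map_exp F hF A).symm
  rw [h2] at h1
  have h3 : Tendsto (fun n : ℕ => (NormedSpace.exp A) ^ n) atTop (𝓝 0) := by
    refine tendsto_pi_nhds.2 fun i => tendsto_pi_nhds.2 fun j => ?_
    have h4 := tendsto_pi_nhds.1 (tendsto_pi_nhds.1 h1 i) j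
    have h5 := (Complex.continuous_re.tendsto _).comp h4
    simp only [← map_pow] at h5
    simpa [Function.comp_def, F] using h5
  have hc : Continuous (Matrix.toEuclideanCLM (n := Fin d) (𝕜 := ℝ)) :=
    LinearMap.continuous_of_finiteDimensional
      (Matrix.toEuclideanCLM (n := Fin d) (𝕜 := ℝ)).toAlgEquiv.toLinearMap
  have h6 := (hc.tendsto 0).comp h3
  rw [map_zero] at h6
  refine h6.congr fun n => ?_
  have h7 : Matrix.toEuclideanCLM (n := Fin d) (𝕜 := ℝ) (NormedSpace.exp ((n : ℝ) • A)) =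
      NormedSpace.exp (Matrix.toEuclideanCLM (n := Fin d) (𝕜 := ℝ) ((n : ℝ) • A)) :=
    NormedSpace.map_exp (Matrix.toEuclideanCLM (n := Fin d) (𝕜 := ℝ)) hc _
  have h8 : NormedSpace.exp ((n : ℝ) • A) = NormedSpace.exp A ^ n := by
    rw [Nat.cast_smul_eq_nsmul]
    exact NormedSpace.exp_nsmul n A
  rw [Function.comp_apply, ← h8, h7, map_smul]

section
variable {𝔸 : Type*} [NormedRing 𝔸] [NormedAlgebra ℝ 𝔸] [CompleteSpace 𝔸]

lemma aux_cocycle (B : ℝ → 𝔸) (M : ℝ) (hB : ∀ t, 0 ≤ t → ‖B t‖ ≤ M)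
    (Φ : ℝ → ℝ → 𝔸) (hi : ∀ s, 0 ≤ s → Φ s s = 1)
    (ho : ∀ s, 0 ≤ s → ∀ t, 0 ≤ t → HasDerivAt (fun τ => Φ τ s) (B t * Φ t s) t)
    (s r t : ℝ) (hs : 0 ≤ s) (hsr : s ≤ r) (hrt : r ≤ t) : Φ t s = Φ t r * Φ r s := by
  have hd : ∀ τ, r ≤ τ → HasDerivAt (fun τ => Φ τ s - Φ τ r * Φ r s)
      (B τ * (Φ τ s - Φ τ r * Φ r s)) τ := by
    intro τ hτ
    have e : B τ * (Φ τ s - Φ τ r * Φ r s) = B τ * Φ τ s - B τ * Φ τ r * Φ r s := by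
      rw [mul_sub, mul_assoc]
    rw [e]
    exact (ho s hs τ (by linarith)).sub ((ho r (by linarith) τ (by linarith)).mul_const (Φ r s))
  have := norm_le_gronwallBound_of_norm_deriv_right_le (δ := 0) (K := M) (ε := 0) (a := r) (b := t)
    (fun τ hτ => (hd τ hτ.1).continuousAt.continuousWithinAt)
    (fun τ hτ => (hd τ hτ.1).hasDerivWithinAt) (by simp [hi r (by linarith)])
    (fun τ hτ => by
      rw [add_zero]
      exact (norm_mul_le _ _).trans
        (mul_le_mul_of_nonneg_right (hB τ (by linarith [hτ.1])) (norm_nonneg _))) t ⟨hrt, le_rfl⟩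
  rw [gronwallBound_ε0_δ0] at this
  exact sub_eq_zero.1 (norm_le_zero_iff.1 this)

lemma aux_growth (h1 : ‖(1 : 𝔸)‖ ≤ 1) (B : ℝ → 𝔸) (M : ℝ) (hB : ∀ t, 0 ≤ t → ‖B t‖ ≤ M)
    (Φ : ℝ → ℝ → 𝔸) (hi : ∀ s, 0 ≤ s → Φ s s = 1)
    (ho : ∀ s, 0 ≤ s → ∀ t, 0 ≤ t → HasDerivAt (fun τ => Φ τ s) (B t * Φ t s) t)
    (s t : ℝ) (hs : 0 ≤ s) (hst : s ≤ t) : ‖Φ t s‖ ≤ Real.exp (M * (t - s)) := by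
  have hd := fun τ (hτ : s ≤ τ) => ho s hs τ (hs.trans hτ)
  have := norm_le_gronwallBound_of_norm_deriv_right_le (δ := 1) (K := M) (ε := 0) (a := s) (b := t)
    (fun τ hτ => (hd τ hτ.1).continuousAt.continuousWithinAt)
    (fun τ hτ => (hd τ hτ.1).hasDerivWithinAt) (by simpa [hi s hs] using h1)
    (fun τ hτ => by
      rw [add_zero]
      exact (norm_mul_le _ _).trans
        (mul_le_mul_of_nonneg_right (hB τ (by linarith [hτ.1])) (norm_nonneg _))) t ⟨hst, le_rfl⟩
  rwa [gronwallBound_ε0, one_mul] at this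

lemma aux_approx (h1 : ‖(1 : 𝔸)‖ ≤ 1) (A : 𝔸) (B : ℝ → 𝔸) (M : ℝ) (hM : 0 < M) (hA : ‖A‖ ≤ M)
    (hB : ∀ t, 0 ≤ t → ‖B t‖ ≤ M)
    (Φ : ℝ → ℝ → 𝔸) (hi : ∀ s, 0 ≤ s → Φ s s = 1)
    (ho : ∀ s, 0 ≤ s → ∀ t, 0 ≤ t → HasDerivAt (fun τ => Φ τ s) (B t * Φ t s) t)
    (T ε s : ℝ) (hT : 0 < T) (hs : 0 ≤ s) (hε : ∀ t, s ≤ t → ‖B t - A‖ ≤ ε) :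
    ‖Φ (s + T) s - NormedSpace.exp (T • A)‖ ≤
      gronwallBound 0 M (ε * Real.exp (M * T)) T := by
  have hd : ∀ τ, s ≤ τ → HasDerivAt (fun τ => Φ τ s - NormedSpace.exp ((τ - s) • A))
      (B τ * Φ τ s - A * NormedSpace.exp ((τ - s) • A)) τ := by
    intro τ hτ
    refine (ho s hs τ (by linarith)).sub ?_
    have h2 := (hasDerivAt_exp_smul_const' (𝕂 := ℝ) A (τ - s)).comp_sub_const τ s
    exact h2
  have hε0 : 0 ≤ ε := (norm_nonneg _).trans (hε s le_rfl)
  have := norm_le_gronwallBound_of_norm_deriv_right_le (δ := 0) (K := M)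
    (ε := ε * Real.exp (M * T)) (a := s) (b := s + T)
    (fun τ hτ => (hd τ hτ.1).continuousAt.continuousWithinAt)
    (fun τ hτ => (hd τ hτ.1).hasDerivWithinAt) (by simp [hi s hs, NormedSpace.exp_zero])
    (fun τ hτ => by
      have e : B τ * Φ τ s - A * NormedSpace.exp ((τ - s) • A) =
        A * (Φ τ s - NormedSpace.exp ((τ - s) • A)) + (B τ - A) * Φ τ s := by noncomm_ring
      rw [e]
      refine (norm_add_le _ _).trans (add_le_add ?_ ?_)
      · exact (norm_mul_le _ _).trans (mul_le_mul_of_nonneg_right hA (norm_nonneg _))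
      · refine (norm_mul_le _ _).trans (mul_le_mul (hε τ hτ.1) ?_ (norm_nonneg _) hε0)
        refine (aux_growth h1 B M hB Φ hi ho s τ hs hτ.1).trans (Real.exp_le_exp.2 ?_)
        exact mul_le_mul_of_nonneg_left (by linarith [hτ.2]) hM.le) (s + T) ⟨by linarith, le_rfl⟩
  simpa using this

lemma aux_main (h1 : ‖(1 : 𝔸)‖ ≤ 1) (A : 𝔸) (B : ℝ → 𝔸)
    (hBc : ContinuousOn B (Ici 0)) (hBl : Tendsto B atTop (𝓝 A))
    (hE : Tendsto (fun n : ℕ => NormedSpace.exp ((n : ℝ) • A)) atTop (𝓝 0))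
    (Φ : ℝ → ℝ → 𝔸) (hi : ∀ s, 0 ≤ s → Φ s s = 1)
    (ho : ∀ s, 0 ≤ s → ∀ t, 0 ≤ t → HasDerivAt (fun τ => Φ τ s) (B t * Φ t s) t) :
    ∃ C > (0 : ℝ), ∃ μ > (0 : ℝ), ∀ s t : ℝ, 0 ≤ s → s ≤ t →
      ‖Φ t s‖ ≤ C * Real.exp (-μ * (t - s)) := by
  obtain ⟨M, hM, hA, hB⟩ : ∃ M > 0, ‖A‖ ≤ M ∧ ∀ t, 0 ≤ t → ‖B t‖ ≤ M := by
    have hev := hBl.eventually (Metric.ball_mem_nhds A one_pos)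
    obtain ⟨R, hR⟩ := eventually_atTop.1 hev
    obtain ⟨M1, hM1⟩ := (isCompact_Icc (a := (0 : ℝ)) (b := R)).exists_bound_of_continuousOn
      (hBc.mono fun t ht => ht.1)
    refine ⟨max M1 (‖A‖ + 1), by positivity, ?_, ?_⟩
    · exact le_trans (by linarith) (le_max_right _ _)
    · intro t ht
      rcases le_total t R with h | h
      · exact (hM1 t ⟨ht, h⟩).trans (le_max_left _ _)
      · refine le_trans ?_ (le_max_right _ _)
        have h2 := hR t h
        rw [dist_eq_norm] at h2
        have h3 := norm_add_le (B t - A) A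
        rw [sub_add_cancel] at h3
        linarith
  obtain ⟨T, hT, hTe⟩ : ∃ T : ℝ, 0 < T ∧ ‖NormedSpace.exp (T • A)‖ ≤ 1 / 4 := by
    have h2 := hE.norm
    rw [norm_zero] at h2
    obtain ⟨n, hn, hn0⟩ := ((h2.eventually (gt_mem_nhds (show (0 : ℝ) < 1 / 4 by norm_num))).and
      (eventually_gt_atTop 0)).exists
    exact ⟨n, by exact_mod_cast hn0, hn.le⟩
  obtain ⟨ε, hε, hεb⟩ : ∃ ε > 0, gronwallBound 0 M (ε * Real.exp (M * T)) T ≤ 1 / 4 := by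
    have hc : Continuous fun ε => gronwallBound 0 M (ε * Real.exp (M * T)) T :=
      (gronwallBound_continuous_ε 0 M T).comp (continuous_id.mul continuous_const)
    have h2 := hc.tendsto 0
    rw [zero_mul, gronwallBound_ε0_δ0] at h2
    have h3 := (h2.mono_left nhdsWithin_le_nhds : Tendsto _ (𝓝[>] (0 : ℝ)) _).eventually
      (gt_mem_nhds (show (0 : ℝ) < 1 / 4 by norm_num))
    obtain ⟨ε, h4, h5⟩ := (h3.and self_mem_nhdsWithin).exists
    exact ⟨ε, h5, h4.le⟩
  obtain ⟨S, hS0, hS⟩ : ∃ S : ℝ, 0 ≤ S ∧ ∀ t, S ≤ t → ‖B t - A‖ ≤ ε := by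
    obtain ⟨R, hR⟩ := eventually_atTop.1 (hBl.eventually (Metric.ball_mem_nhds A hε))
    refine ⟨max R 0, le_max_right _ _, fun t ht => ?_⟩
    have h2 := hR t ((le_max_left _ _).trans ht)
    rw [dist_eq_norm] at h2
    exact h2.le
  have hhalf : ∀ s, S ≤ s → ‖Φ (s + T) s‖ ≤ 1 / 2 := by
    intro s hs
    have h2 := aux_approx h1 A B M hM hA hB Φ hi ho T ε s hT (hS0.trans hs)
      (fun t ht => hS t (hs.trans ht))
    have h3 := norm_add_le (Φ (s + T) s - NormedSpace.exp (T • A)) (NormedSpace.exp (T • A))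
    rw [sub_add_cancel] at h3
    linarith
  have hgr := aux_growth h1 B M hB Φ hi ho
  have hco := aux_cocycle B M hB Φ hi ho
  obtain ⟨μ, hμ, hμT⟩ : ∃ μ > 0, Real.exp (-μ * T) = 1 / 2 := by
    refine ⟨Real.log 2 / T, div_pos (Real.log_pos (by norm_num)) hT, ?_⟩
    rw [neg_mul, div_mul_cancel₀ _ hT.ne', Real.exp_neg, Real.exp_log (by norm_num)]
    norm_num
  have hind : ∀ n : ℕ, ∀ s t, S ≤ s → s ≤ t → t ≤ s + (n + 1) * T →
      ‖Φ t s‖ ≤ Real.exp ((M + μ) * T) * Real.exp (-μ * (t - s)) := by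
    have hbase : ∀ s t, S ≤ s → s ≤ t → t ≤ s + T →
      ‖Φ t s‖ ≤ Real.exp ((M + μ) * T) * Real.exp (-μ * (t - s)) := by
      intro s t hs hst ht
      refine (hgr s t (hS0.trans hs) hst).trans ?_
      rw [← Real.exp_add, Real.exp_le_exp]
      nlinarith
    intro n
    induction n with
    | zero => intro s t hs hst ht; exact hbase s t hs hst (by simpa using ht)
    | succ n ih =>
      intro s t hs hst ht
      rcases le_total t (s + T) with h | h
      · exact hbase s t hs hst h
      · rw [hco s (s + T) t (hS0.trans hs) (by linarith) h]
        have h2 := ih (s + T) t (by linarith) h (by push_cast at ht; linarith)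
        refine (norm_mul_le _ _).trans
          ((mul_le_mul h2 (hhalf s hs) (norm_nonneg _) (by positivity)).trans_eq ?_)
        rw [← hμT, mul_assoc, ← Real.exp_add]
        congr 2; ring
  have hall : ∀ s t, S ≤ s → s ≤ t →
      ‖Φ t s‖ ≤ Real.exp ((M + μ) * T) * Real.exp (-μ * (t - s)) := by
    intro s t hs hst
    obtain ⟨n, hn⟩ := exists_nat_ge ((t - s) / T)
    refine hind n s t hs hst ?_
    rw [div_le_iff₀ hT] at hn
    linarith
  refine ⟨Real.exp ((M + μ) * T) * Real.exp ((M + μ) * S), by positivity, μ, hμ, ?_⟩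
  intro s t hs hst
  rcases le_total S s with h | h
  · refine (hall s t h hst).trans ?_
    refine mul_le_mul_of_nonneg_right ?_ (Real.exp_nonneg _)
    refine le_mul_of_one_le_right (Real.exp_nonneg _) (Real.one_le_exp (by positivity))
  · rcases le_total t S with h' | h'
    · refine (hgr s t hs hst).trans ?_
      rw [← Real.exp_add, ← Real.exp_add, Real.exp_le_exp]
      have : 0 ≤ (M + μ) * T := by positivity
      nlinarith
    · rw [hco s S t hs h h']
      refine (norm_mul_le _ _).trans
        ((mul_le_mul (hall S t le_rfl h') (hgr s S hs h) (norm_nonneg _) (by positivity)).trans ?_)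
      rw [← Real.exp_add, ← Real.exp_add, ← Real.exp_add, ← Real.exp_add, Real.exp_le_exp]
      nlinarith
end

/-- Let `f` be `C¹` (with Jacobian matrix `Df`), let `p` be a stable
hyperbolic fixed point of `ẋ = f(x)` (`f(p) = 0`, all eigenvalues of `Df(p)` with
strictly negative real part), and let `x(t)` be a solution with `x(t) → p` as `t → ∞`.
Then the transition matrix `Φ(t,s)` of the variational equation `ẏ = Df(x(t)) y` along
`x` satisfies `‖Φ(t,s)‖ ≤ C e^{-μ(t-s)}` for all `t ≥ s ≥ 0`, for some `C, μ > 0`. -/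
theorem stmt5 (d : ℕ)
    (f : EuclideanSpace ℝ (Fin d) → EuclideanSpace ℝ (Fin d))
    (Df : EuclideanSpace ℝ (Fin d) → Matrix (Fin d) (Fin d) ℝ)
    (hDf : ∀ y, HasFDerivAt f (Matrix.toEuclideanCLM (𝕜 := ℝ) (Df y)) y)
    (hDf_cont : Continuous Df)
    (p : EuclideanSpace ℝ (Fin d))
    (hfp : f p = 0)
    (heig : ∀ μ ∈ spectrum ℂ ((Df p).map (algebraMap ℝ ℂ)), μ.re < 0)
    (x : ℝ → EuclideanSpace ℝ (Fin d))
    (hx : ∀ t : ℝ, 0 ≤ t → HasDerivAt x (f (x t)) t)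
    (hx_lim : Tendsto x atTop (𝓝 p))
    (Φ : ℝ → ℝ → (EuclideanSpace ℝ (Fin d) →L[ℝ] EuclideanSpace ℝ (Fin d)))
    (hΦ_init : ∀ s : ℝ, 0 ≤ s → Φ s s = ContinuousLinearMap.id ℝ _)
    (hΦ_ode : ∀ s : ℝ, 0 ≤ s → ∀ t : ℝ, 0 ≤ t →
      HasDerivAt (fun τ => Φ τ s)
        ((Matrix.toEuclideanCLM (𝕜 := ℝ) (Df (x t))).comp (Φ t s)) t) :
    ∃ C > (0 : ℝ), ∃ μ > (0 : ℝ), ∀ s t : ℝ, 0 ≤ s → s ≤ t →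
      ‖Φ t s‖ ≤ C * Real.exp (-μ * (t - s)) := by
  have hc : Continuous (Matrix.toEuclideanCLM (n := Fin d) (𝕜 := ℝ)) :=
    LinearMap.continuous_of_finiteDimensional
      (Matrix.toEuclideanCLM (n := Fin d) (𝕜 := ℝ)).toAlgEquiv.toLinearMap
  have hcc : Continuous fun y => Matrix.toEuclideanCLM (n := Fin d) (𝕜 := ℝ) (Df y) :=
    hc.comp hDf_cont
  refine aux_main (𝔸 := EuclideanSpace ℝ (Fin d) →L[ℝ] EuclideanSpace ℝ (Fin d))
    ContinuousLinearMap.norm_id_le (Matrix.toEuclideanCLM (𝕜 := ℝ) (Df p))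
    (fun t => Matrix.toEuclideanCLM (𝕜 := ℝ) (Df (x t))) ?_ ?_ (aux_real (Df p) heig) Φ
    hΦ_init hΦ_ode
  · exact hcc.comp_continuousOn fun t ht => (hx t ht).continuousAt.continuousWithinAt
  · exact (hcc.tendsto p).comp hx_lim
end

section
/- Let f : ℝ^d → ℝ^d be continuously differentiable, let p be a stable hyperbolic fixed point of ẋ = f(x) (f(p) = 0 and all eigenvalues of Df(p) have strictly negative real part), and let x(t) solve ẋ = f(x) with x(t) → p as t → ∞. Then the conditioning function E(t) = ∫₀ᵗ ‖Φ(t,s)‖ ds of the trajectory x(t) is bounded by a constant: there exists M > 0 with E(t) ≤ M for all t ≥ 0. -/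
open scoped Topology
open Set Filter

lemma exp_apply_eig {F : Type*} [NormedAddCommGroup F] [NormedSpace ℂ F] [FiniteDimensional ℂ F]
    (a : F →L[ℂ] F) (μ : ℂ) (v : F) (h : a v = μ • v) :
    NormedSpace.exp a v = Complex.exp μ • v := by
  have : CompleteSpace F := FiniteDimensional.complete ℂ F
  have h1 := NormedSpace.exp_series_hasSum_exp' (𝕂 := ℂ) a
  have h2 := h1.mapL (ContinuousLinearMap.apply ℂ F v)
  have h3 := (NormedSpace.exp_series_hasSum_exp' (𝕂 := ℂ) μ).smul_const v
  have hp : ∀ n : ℕ, (a ^ n) v = μ ^ n • v := by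
    intro n
    induction n with
    | zero => simp
    | succ k ih => rw [pow_succ, mul_apply_eq_comp, h, map_smul, ih, smul_smul, pow_succ']
  rw [Complex.exp_eq_exp_ℂ]
  refine h2.unique ?_
  convert h3 using 2 with n
  simp [hp, smul_smul]

lemma spectrum_exp_lt {F : Type*} [NormedAddCommGroup F] [NormedSpace ℂ F] [FiniteDimensional ℂ F]
    (a : F →L[ℂ] F) (ha : ∀ μ ∈ spectrum ℂ a, μ.re < 0) (l : ℂ)
    (hl : l ∈ spectrum ℂ (NormedSpace.exp a)) : ‖l‖ < 1 := by
  have hs : ∀ b : F →L[ℂ] F, spectrum ℂ b = spectrum ℂ (b : Module.End ℂ F) := fun b =>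
    (AlgEquiv.spectrum_eq (Module.End.toContinuousLinearMap F (𝕜 := ℂ)).symm b).symm
  rw [hs, ← Module.End.hasEigenvalue_iff_mem_spectrum] at hl
  set g : Module.End ℂ F := ((NormedSpace.exp a : F →L[ℂ] F)).toLinearMap with hg
  have hc : Commute (a : Module.End ℂ F) g := by
    have : Commute a (NormedSpace.exp a) := (Commute.refl a).exp_right
    have h2 := congrArg (fun b : F →L[ℂ] F => (b : Module.End ℂ F)) this.eq
    exact h2
  have hm : ∀ w ∈ g.eigenspace l, (a : Module.End ℂ F) w ∈ g.eigenspace l :=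
    Module.End.mapsTo_genEigenspace_of_comm hc.symm l 1
  have : Nontrivial (g.eigenspace l) := Submodule.nontrivial_iff_ne_bot.2 hl
  obtain ⟨μ, hμ⟩ := Module.End.exists_eigenvalue ((a : Module.End ℂ F).restrict hm)
  obtain ⟨⟨w, hw⟩, hw1⟩ := hμ.exists_hasEigenvector
  have hw2 : a w = μ • w := by
    have := congrArg Subtype.val hw1.apply_eq_smul
    simpa using this
  have hw0 : w ≠ 0 := fun h0 => hw1.2 (by ext; simpa using h0)
  have hμs : μ ∈ spectrum ℂ a := by
    rw [hs, ← Module.End.hasEigenvalue_iff_mem_spectrum]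
    exact Module.End.hasEigenvalue_of_hasEigenvector (x := w) 
      ⟨Module.End.mem_eigenspace_iff.2 hw2, hw0⟩
  have h1 := exp_apply_eig a μ w hw2
  have h2 : (NormedSpace.exp a) w = l • w := Module.End.mem_eigenspace_iff.1 hw
  have h3 : l = Complex.exp μ := smul_left_injective ℂ hw0 (by simpa using h2.symm.trans h1)
  rw [h3, Complex.norm_exp]
  exact Real.exp_lt_one_iff.2 (ha μ hμs)

lemma exp_pow_tendsto {F : Type*} [NormedAddCommGroup F] [NormedSpace ℂ F] [FiniteDimensional ℂ F]
    (a : F →L[ℂ] F) (ha : ∀ μ ∈ spectrum ℂ a, μ.re < 0) :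
    Tendsto (fun n : ℕ => (NormedSpace.exp a) ^ n) atTop (𝓝 0) := by
  have : CompleteSpace F := FiniteDimensional.complete ℂ F
  rcases subsingleton_or_nontrivial F with hF | hF
  · have : Subsingleton (F →L[ℂ] F) := inferInstance
    exact tendsto_const_nhds.congr fun n => Subsingleton.elim _ _
  have hr : spectralRadius ℂ (NormedSpace.exp a) < ((1 : NNReal) : ENNReal) := by
    apply spectrum.spectralRadius_lt_of_forall_lt
    intro k hk
    exact spectrum_exp_lt a ha k hk
  obtain ⟨r, hr1, hr2⟩ := ENNReal.lt_iff_exists_nnreal_btwn.1 hr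
  have hg := spectrum.pow_nnnorm_pow_one_div_tendsto_nhds_spectralRadius (NormedSpace.exp a)
  have hev := hg.eventually_lt_const hr1
  have hr2' : (r : ℝ) < 1 := by exact_mod_cast hr2
  refine squeeze_zero_norm' ?_ (tendsto_pow_atTop_nhds_zero_of_lt_one r.2 hr2')
  filter_upwards [hev, eventually_gt_atTop 0] with n hn hn0
  have hn' : (0 : ℝ) < n := by exact_mod_cast hn0
  have h4 := ENNReal.rpow_le_rpow hn.le hn'.le
  rw [← ENNReal.rpow_mul, one_div, inv_mul_cancel₀ hn'.ne', ENNReal.rpow_one,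
    ENNReal.rpow_natCast] at h4
  exact_mod_cast h4

lemma real_exp_pow_tendsto (d : ℕ) (M : Matrix (Fin d) (Fin d) ℝ)
    (heig : ∀ μ ∈ spectrum ℂ (M.map (algebraMap ℝ ℂ)), μ.re < 0) :
    Tendsto (fun n : ℕ => (NormedSpace.exp (Matrix.toEuclideanCLM (𝕜 := ℝ) M)) ^ n) atTop
      (𝓝 0) := by
  let φ : (EuclideanSpace ℝ (Fin d) →L[ℝ] EuclideanSpace ℝ (Fin d)) →ₐ[ℝ]
      (EuclideanSpace ℂ (Fin d) →L[ℂ] EuclideanSpace ℂ (Fin d)) :=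
    ((((Matrix.toEuclideanCLM (n := Fin d) (𝕜 := ℂ)).toAlgEquiv.restrictScalars ℝ).toAlgHom.comp
      (Algebra.ofId ℝ ℂ).mapMatrix)).comp
      (Matrix.toEuclideanCLM (n := Fin d) (𝕜 := ℝ)).symm.toAlgEquiv.toAlgHom
  have hφ : ∀ N, φ (Matrix.toEuclideanCLM (𝕜 := ℝ) N) =
      Matrix.toEuclideanCLM (𝕜 := ℂ) (N.map (algebraMap ℝ ℂ)) := by
    intro N
    simp [φ]
    rfl
  have hinj : Function.Injective φ := by
    intro u v huv
    obtain ⟨u, rfl⟩ := (Matrix.toEuclideanCLM (n := Fin d) (𝕜 := ℝ)).surjective u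
    obtain ⟨v, rfl⟩ := (Matrix.toEuclideanCLM (n := Fin d) (𝕜 := ℝ)).surjective v
    have huv := (hφ u).symm.trans (huv.trans (hφ v))
    have := (Matrix.toEuclideanCLM (n := Fin d) (𝕜 := ℂ)).injective huv
    exact congrArg _ (Matrix.map_injective (algebraMap ℝ ℂ).injective this)
  have : FiniteDimensional ℝ (EuclideanSpace ℂ (Fin d) →L[ℂ] EuclideanSpace ℂ (Fin d)) :=
    FiniteDimensional.trans ℝ ℂ _
  have hemb := LinearMap.isClosedEmbedding_of_injective (𝕜 := ℝ) (f := φ.toLinearMap)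
    (LinearMap.ker_eq_bot.2 hinj)
  have hcont : Continuous φ := hemb.continuous
  rw [hemb.isEmbedding.tendsto_nhds_iff]
  have h1 : φ.toLinearMap 0 = 0 := map_zero _
  rw [h1]
  have h2 := exp_pow_tendsto (Matrix.toEuclideanCLM (𝕜 := ℂ) (M.map (algebraMap ℝ ℂ))) (by
    rw [AlgEquiv.spectrum_eq (Matrix.toEuclideanCLM (n := Fin d) (𝕜 := ℂ))]
    exact heig)
  refine h2.congr fun n => ?_
  simp only [Function.comp, AlgHom.toLinearMap_apply, map_pow]
  letI : NormedAlgebra ℚ (EuclideanSpace ℝ (Fin d) →L[ℝ] EuclideanSpace ℝ (Fin d)) :=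
    NormedAlgebra.restrictScalars ℚ ℝ _
  rw [NormedSpace.map_exp φ hcont, hφ]

lemma lyapunov {E : Type*} [NormedAddCommGroup E] [InnerProductSpace ℝ E] [FiniteDimensional ℝ E]
    (A : E →L[ℝ] E) (hA : Tendsto (fun n : ℕ => (NormedSpace.exp A) ^ n) atTop (𝓝 0)) :
    ∃ (P : E →L[ℝ] E) (c : ℝ), 0 < c ∧ (∀ u w, inner ℝ (P u) w = inner ℝ u (P w)) ∧
      (∀ v, c * ‖v‖ ^ 2 ≤ inner ℝ (P v) v) ∧
      (∀ v, 2 * inner ℝ (P v) (A v) ≤ - (1 / 2) * ‖v‖ ^ 2) := by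
  have : CompleteSpace E := FiniteDimensional.complete ℝ E
  letI : NormedAlgebra ℚ (E →L[ℝ] E) := NormedAlgebra.restrictScalars ℚ ℝ _
  obtain ⟨n, hn, hn1⟩ : ∃ n : ℕ, ‖(NormedSpace.exp A) ^ n‖ < 1 / 2 ∧ 1 ≤ n := by
    have h1 := hA.norm
    rw [norm_zero] at h1
    exact ((h1.eventually_lt_const (by norm_num)).and (eventually_ge_atTop 1)).exists
  set e : ℝ → (E →L[ℝ] E) := fun τ => NormedSpace.exp (τ • A) with he
  have hT : (0 : ℝ) < n := by exact_mod_cast hn1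
  have hn : ‖e n‖ < 1 / 2 := by
    have : e n = (NormedSpace.exp A) ^ n := by
      rw [he, ← NormedSpace.exp_nsmul]
      simp [Nat.cast_smul_eq_nsmul]
    rwa [this]
  have hed : ∀ τ, HasDerivAt e (e τ * A) τ := fun τ => hasDerivAt_exp_smul_const A τ
  have hec : Continuous e := continuous_iff_continuousAt.2 fun τ => (hed τ).continuousAt
  have hinv : ∀ τ, e (-τ) * e τ = 1 := by
    intro τ
    have hcomm : Commute ((-τ) • A) (τ • A) :=
      ((Commute.refl A).smul_left _).smul_right _
    simp only [he]
    rw [← NormedSpace.exp_add_of_commute hcomm]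
    simp
  set G : ℝ → (E →L[ℝ] E) := fun τ => star (e τ) * e τ with hG
  have hGc : Continuous G := (continuous_star.comp hec).mul hec
  have hGi : ∀ τ u w, inner ℝ (G τ u) w = inner ℝ (e τ u) (e τ w) := by
    intro τ u w
    simp only [hG, ContinuousLinearMap.star_eq_adjoint, mul_apply_eq_comp,
      ContinuousLinearMap.adjoint_inner_left]
  have hPi : ∀ u w, inner ℝ ((∫ τ in (0:ℝ)..n, G τ) u) w =
      ∫ τ in (0:ℝ)..n, inner ℝ (e τ u) (e τ w) := by
    intro u w
    have := ContinuousLinearMap.intervalIntegral_comp_comm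
      ((innerSL ℝ w).comp (ContinuousLinearMap.apply ℝ E u)) (hGc.intervalIntegrable 0 (n:ℝ))
      (μ := MeasureTheory.volume)
    simp only [ContinuousLinearMap.comp_apply, ContinuousLinearMap.apply_apply,
      innerSL_apply_apply] at this
    rw [real_inner_comm, ← this]
    simp only [← hGi]
    simp only [real_inner_comm w]
  obtain ⟨K, hK⟩ : ∃ K, ∀ τ ∈ Icc (0:ℝ) n, ‖e (-τ)‖ ≤ K :=
    isCompact_Icc.exists_bound_of_continuousOn (hec.comp continuous_neg).continuousOn
  set L := max K 1 with hL
  have hL0 : 0 < L := lt_of_lt_of_le one_pos (le_max_right _ _)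
  refine ⟨∫ τ in (0:ℝ)..n, G τ, n * (1 / L ^ 2), by positivity, ?_, ?_, ?_⟩
  · intro u w
    rw [hPi, real_inner_comm, hPi]
    simp only [real_inner_comm]
  · intro v
    rw [hPi]
    have h1 : ∫ τ in (0:ℝ)..n, (1 / L ^ 2 * ‖v‖ ^ 2) = n * (1 / L ^ 2) * ‖v‖ ^ 2 := by
      rw [intervalIntegral.integral_const]; simp; ring
    rw [← h1]
    refine intervalIntegral.integral_mono_on hT.le (by simp) ?_ ?_
    · apply Continuous.intervalIntegrable
      fun_prop
    · intro τ hτ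
      rw [real_inner_self_eq_norm_sq]
      have h2 : v = e (-τ) (e τ v) := by
        rw [← mul_apply_eq_comp, hinv]; rfl
      have h3 : ‖v‖ ≤ L * ‖e τ v‖ := by
        calc ‖v‖ = ‖e (-τ) (e τ v)‖ := by rw [← h2]
          _ ≤ ‖e (-τ)‖ * ‖e τ v‖ := ContinuousLinearMap.le_opNorm _ _
          _ ≤ _ := by
            gcongr
            exact (hK τ hτ).trans (le_max_left _ _)
      have h4 : ‖v‖ ^ 2 ≤ L ^ 2 * ‖e τ v‖ ^ 2 := by
        rw [← mul_pow]; gcongr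
      rw [one_div, inv_mul_le_iff₀ (by positivity)]
      exact h4
  · intro v
    rw [hPi, ← intervalIntegral.integral_const_mul]
    have hd : ∀ τ, HasDerivAt (fun τ => ‖e τ v‖ ^ 2) (2 * inner ℝ (e τ v) (e τ (A v))) τ := by
      intro τ
      have := ((hed τ).clm_apply (hasDerivAt_const τ v)).norm_sq
      simpa using this
    rw [intervalIntegral.integral_eq_sub_of_hasDerivAt (fun τ _ => hd τ)
      (by apply Continuous.intervalIntegrable; fun_prop)]
    have h0 : e 0 v = v := by simp [he]
    rw [h0]
    have h5 : ‖e n v‖ ≤ 1 / 2 * ‖v‖ :=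
      (ContinuousLinearMap.le_opNorm _ _).trans (by gcongr)
    have h6 : ‖e n v‖ ^ 2 ≤ (1 / 2 * ‖v‖) ^ 2 := by gcongr
    nlinarith [sq_nonneg ‖v‖]

lemma exp_growth {g g' : ℝ → ℝ} {k a b : ℝ} (hab : a ≤ b)
    (hg : ∀ t ∈ Icc a b, HasDerivAt g (g' t) t) (hk : ∀ t ∈ Icc a b, g' t ≤ k * g t) :
    g b ≤ Real.exp (k * (b - a)) * g a := by
  have hd : ∀ t ∈ Icc a b, HasDerivAt (fun t => Real.exp (-k * t) * g t)
      (Real.exp (-k * t) * (g' t - k * g t)) t := by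
    intro t ht
    have h1 : HasDerivAt (fun t => Real.exp (-k * t)) (Real.exp (-k * t) * (-k)) t := by
      simpa using ((hasDerivAt_id t).const_mul (-k)).exp
    refine (h1.mul (hg t ht)).congr_deriv ?_
    ring
  have hanti : AntitoneOn (fun t => Real.exp (-k * t) * g t) (Icc a b) := by
    apply antitoneOn_of_deriv_nonpos (convex_Icc a b)
    · exact fun t ht => (hd t ht).continuousAt.continuousWithinAt
    · exact fun t ht => (hd t (interior_subset ht)).differentiableAt.differentiableWithinAt
    · intro t ht
      rw [(hd t (interior_subset ht)).deriv]
      exact mul_nonpos_of_nonneg_of_nonpos (Real.exp_pos _).le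
        (by linarith [hk t (interior_subset ht)])
  have h := hanti (left_mem_Icc.2 hab) (right_mem_Icc.2 hab) hab
  simp only at h
  have h2 : g b = Real.exp (k * b) * (Real.exp (-k * b) * g b) := by
    rw [← mul_assoc, ← Real.exp_add]; simp
  rw [h2]
  refine (mul_le_mul_of_nonneg_left h (Real.exp_pos _).le).trans (le_of_eq ?_)
  rw [← mul_assoc, ← Real.exp_add]
  congr 2; ring

/-- Exponential decay of a solution of a linear equation whose coefficients tend to `A`. -/
lemma decay {E : Type*} [NormedAddCommGroup E] [InnerProductSpace ℝ E] [FiniteDimensional ℝ E]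
    (A : E →L[ℝ] E) (hA : Tendsto (fun n : ℕ => (NormedSpace.exp A) ^ n) atTop (𝓝 0))
    (B : ℝ → E →L[ℝ] E) (hB : ContinuousOn B (Ici 0)) (hBA : Tendsto B atTop (𝓝 A)) :
    ∃ K γ : ℝ, 0 < K ∧ 0 < γ ∧ ∀ y : ℝ → E, (∀ t, 0 ≤ t → HasDerivAt y (B t (y t)) t) →
      ∀ s t, 0 ≤ s → s ≤ t → ‖y t‖ ≤ K * Real.exp (-γ * (t - s)) * ‖y s‖ := by
  obtain ⟨P, c, hc, hsymm, hpos, hneg⟩ := lyapunov A hA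
  set C := ‖P‖ + 1 with hC
  have hC0 : 0 < C := by positivity
  have hPC : ‖P‖ ≤ C := by linarith
  have hup : ∀ u w, inner ℝ (P u) w ≤ C * ‖u‖ * ‖w‖ := by
    intro u w
    refine (real_inner_le_norm _ _).trans ?_
    gcongr
    exact (P.le_opNorm u).trans (by gcongr)
  -- time after which the coefficient is close to `A`
  obtain ⟨T₀, hT₀⟩ : ∃ T₀ : ℝ, ∀ t ≥ T₀, ‖B t - A‖ < 1 / (8 * C) := by
    have := (tendsto_iff_norm_sub_tendsto_zero.1 hBA).eventually_lt_const
      (show (0:ℝ) < 1 / (8 * C) by positivity)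
    exact eventually_atTop.1 this
  set T := max T₀ 0 with hT
  have hT0 : 0 ≤ T := le_max_right _ _
  obtain ⟨L, hL⟩ : ∃ L, ∀ t ∈ Icc (0:ℝ) T, ‖B t‖ ≤ L :=
    isCompact_Icc.exists_bound_of_continuousOn (hB.mono Icc_subset_Ici_self)
  set k := 2 * C * max L 0 / c with hk
  have hk0 : 0 ≤ k := by positivity
  set β := 1 / (4 * C) with hβ
  have hβ0 : 0 < β := by positivity
  set Q := Real.exp ((k + β) * T) * (C / c) with hQ
  have hQ0 : 0 < Q := by positivity
  refine ⟨Real.sqrt Q, β / 2, Real.sqrt_pos.2 hQ0, by positivity, ?_⟩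
  intro y hy s t hs hst
  set V : ℝ → ℝ := fun t => inner ℝ (P (y t)) (y t) with hV
  have hVd : ∀ t, 0 ≤ t → HasDerivAt V (2 * inner ℝ (P (y t)) (B t (y t))) t := by
    intro t ht
    have h1 := (P.hasFDerivAt.comp_hasDerivAt t (hy t ht)).inner ℝ (hy t ht)
    refine h1.congr_deriv ?_
    rw [hsymm (B t (y t)), real_inner_comm (P (y t))]
    simp only [Function.comp]; ring
  have hV0 : ∀ t, 0 ≤ V t := fun t => le_trans (by positivity) (hpos (y t))
  have hVC : ∀ t, V t ≤ C * ‖y t‖ ^ 2 := fun t => (hup _ _).trans (by rw [sq, mul_assoc])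
  have g1 : ∀ t ∈ Icc 0 T, 2 * inner ℝ (P (y t)) (B t (y t)) ≤ k * V t := by
    intro t ht
    have h1 : ‖B t (y t)‖ ≤ max L 0 * ‖y t‖ :=
      ((B t).le_opNorm _).trans (by gcongr; exact (hL t ht).trans (le_max_left _ _))
    calc 2 * inner ℝ (P (y t)) (B t (y t)) ≤ 2 * (C * ‖y t‖ * (max L 0 * ‖y t‖)) := by
          gcongr
          exact (hup _ _).trans (by gcongr)
      _ = k * (c * ‖y t‖ ^ 2) := by rw [hk]; field_simp
      _ ≤ k * V t := by gcongr; exact hpos _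
  have g2 : ∀ t, T ≤ t → 2 * inner ℝ (P (y t)) (B t (y t)) ≤ (-β) * V t := by
    intro t ht
    have h1 : ‖(B t - A) (y t)‖ ≤ 1 / (8 * C) * ‖y t‖ :=
      ((B t - A).le_opNorm _).trans
        (by gcongr; exact (hT₀ t ((le_max_left _ _).trans ht)).le)
    have h2 : B t (y t) = A (y t) + (B t - A) (y t) := by simp
    have h3 : inner ℝ (P (y t)) ((B t - A) (y t)) ≤ 1 / 8 * ‖y t‖ ^ 2 := by
      refine (hup _ _).trans ?_
      calc C * ‖y t‖ * ‖(B t - A) (y t)‖ ≤ C * ‖y t‖ * (1 / (8 * C) * ‖y t‖) := by gcongr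
        _ = _ := by field_simp
    have h4 : β * V t ≤ 1 / 4 * ‖y t‖ ^ 2 := by
      calc β * V t ≤ β * (C * ‖y t‖ ^ 2) := by gcongr; exact hVC t
        _ = _ := by rw [hβ]; field_simp
    rw [h2, inner_add_right]
    linarith [hneg (y t)]
  have e1 : ∀ a b, 0 ≤ a → a ≤ b → b ≤ T → V b ≤ Real.exp (k * (b - a)) * V a :=
    fun a b ha hab hb => exp_growth hab (fun t ht => hVd t (ha.trans ht.1))
      (fun t ht => g1 t ⟨ha.trans ht.1, ht.2.trans hb⟩)
  have e2 : ∀ a b, T ≤ a → a ≤ b → V b ≤ Real.exp (-β * (b - a)) * V a :=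
    fun a b ha hab => exp_growth hab (fun t ht => hVd t (hT0.trans (ha.trans ht.1)))
      (fun t ht => g2 t (ha.trans ht.1))
  have key : V t ≤ Real.exp ((k + β) * T) * Real.exp (-β * (t - s)) * V s := by
    rw [← Real.exp_add]
    rcases le_total t T with htT | htT
    · refine (e1 s t hs hst htT).trans ?_
      refine mul_le_mul_of_nonneg_right (Real.exp_le_exp.2 ?_) (hV0 s)
      nlinarith
    · rcases le_total s T with hsT | hsT
      · have h1 := e2 T t le_rfl htT
        have h2 := e1 s T hs hsT le_rfl
        refine h1.trans ((mul_le_mul_of_nonneg_left h2 (Real.exp_pos _).le).trans ?_)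
        rw [← mul_assoc, ← Real.exp_add]
        refine mul_le_mul_of_nonneg_right (Real.exp_le_exp.2 ?_) (hV0 s)
        nlinarith
      · refine (e2 s t hsT hst).trans ?_
        refine mul_le_mul_of_nonneg_right (Real.exp_le_exp.2 ?_) (hV0 s)
        nlinarith
  have h7 : ‖y t‖ ^ 2 ≤ (Real.sqrt Q * Real.exp (-(β / 2) * (t - s)) * ‖y s‖) ^ 2 := by
    have h8 : Real.exp (-(β / 2) * (t - s)) ^ 2 = Real.exp (-β * (t - s)) := by
      rw [← Real.exp_nat_mul]; congr 1; push_cast; ring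
    rw [mul_pow, mul_pow, Real.sq_sqrt hQ0.le, h8, hQ]
    have h9 : c * ‖y t‖ ^ 2 ≤ Real.exp ((k + β) * T) * Real.exp (-β * (t - s)) *
        (C * ‖y s‖ ^ 2) := by
      refine (hpos (y t)).trans (key.trans ?_)
      gcongr
      exact hVC s
    rw [← mul_le_mul_iff_right₀ hc]
    refine h9.trans (le_of_eq ?_)
    field_simp
  exact le_of_sq_le_sq h7 (by positivity)

/-- Let `f` be `C¹` (with Jacobian matrix `Df`), let `p` be a stable
hyperbolic fixed point of `ẋ = f(x)` (`f(p) = 0`, all eigenvalues of `Df(p)` with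
strictly negative real part), and let `x(t)` be a solution with `x(t) → p` as `t → ∞`.
Then the conditioning function `E(t) = ∫₀ᵗ ‖Φ(t,s)‖ ds` of the trajectory `x`, where
`Φ` is the transition matrix of the variational equation `ẏ = Df(x(t)) y` along `x`,
is bounded by a constant `M > 0` for all `t ≥ 0`. -/
theorem stmt6 (d : ℕ)
    (f : EuclideanSpace ℝ (Fin d) → EuclideanSpace ℝ (Fin d))
    (Df : EuclideanSpace ℝ (Fin d) → Matrix (Fin d) (Fin d) ℝ)
    (hDf : ∀ y, HasFDerivAt f (Matrix.toEuclideanCLM (𝕜 := ℝ) (Df y)) y)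
    (hDf_cont : Continuous Df)
    (p : EuclideanSpace ℝ (Fin d))
    (hfp : f p = 0)
    (heig : ∀ μ ∈ spectrum ℂ ((Df p).map (algebraMap ℝ ℂ)), μ.re < 0)
    (x : ℝ → EuclideanSpace ℝ (Fin d))
    (hx : ∀ t : ℝ, 0 ≤ t → HasDerivAt x (f (x t)) t)
    (hx_lim : Tendsto x atTop (𝓝 p))
    (Φ : ℝ → ℝ → (EuclideanSpace ℝ (Fin d) →L[ℝ] EuclideanSpace ℝ (Fin d)))
    (hΦ_init : ∀ s : ℝ, 0 ≤ s → Φ s s = ContinuousLinearMap.id ℝ _)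
    (hΦ_ode : ∀ s : ℝ, 0 ≤ s → ∀ t : ℝ, 0 ≤ t →
      HasDerivAt (fun τ => Φ τ s)
        ((Matrix.toEuclideanCLM (𝕜 := ℝ) (Df (x t))).comp (Φ t s)) t) :
    ∃ M > (0 : ℝ), ∀ t : ℝ, 0 ≤ t →
      (∫ s in (0 : ℝ)..t, ‖Φ t s‖) ≤ M := by
  have hlim := real_exp_pow_tendsto d (Df p) heig
  have hcE : Continuous (fun N : Matrix (Fin d) (Fin d) ℝ =>
      (Matrix.toEuclideanCLM (𝕜 := ℝ) N)) :=
    LinearMap.continuous_of_finiteDimensional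
      (Matrix.toEuclideanCLM (n := Fin d) (𝕜 := ℝ)).toAlgEquiv.toLinearMap
  have hc2 := hcE.comp hDf_cont
  obtain ⟨K, γ, hK, hγ, hdec⟩ := decay _ hlim
    (fun t => Matrix.toEuclideanCLM (𝕜 := ℝ) (Df (x t)))
    (fun t ht => (hc2.continuousAt.comp (hx t ht).continuousAt).continuousWithinAt)
    ((hc2.tendsto p).comp hx_lim)
  have hbound : ∀ s t, 0 ≤ s → s ≤ t → ‖Φ t s‖ ≤ K * Real.exp (-γ * (t - s)) := by
    intro s t hs hst
    refine ContinuousLinearMap.opNorm_le_bound _ (by positivity) fun v => ?_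
    have := hdec (fun τ => Φ τ s v) (fun τ hτ => by
      simpa using (hΦ_ode s hs τ hτ).clm_apply (hasDerivAt_const τ v)) s t hs hst
    simpa [hΦ_init s hs] using this
  refine ⟨K / γ, by positivity, fun t ht => ?_⟩
  by_cases hi : IntervalIntegrable (fun s => ‖Φ t s‖) MeasureTheory.volume 0 t
  · have hci : Continuous fun s => K * Real.exp (-γ * (t - s)) := by fun_prop
    refine (intervalIntegral.integral_mono_on ht hi (hci.intervalIntegrable 0 t)
      fun s hs => hbound s t hs.1 hs.2).trans ?_
    have hd : ∀ s, HasDerivAt (fun s => K / γ * Real.exp (-γ * (t - s)))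
        (K * Real.exp (-γ * (t - s))) s := by
      intro s
      have h1 := ((((hasDerivAt_id s).const_sub t).const_mul (-γ)).exp).const_mul (K / γ)
      refine h1.congr_deriv ?_
      simp only [id]; field_simp
    rw [intervalIntegral.integral_eq_sub_of_hasDerivAt (fun s _ => hd s)
      (hci.intervalIntegrable 0 t)]
    have : 0 ≤ K / γ * Real.exp (-γ * (t - 0)) := by positivity
    simp only [sub_self, mul_zero, Real.exp_zero, mul_one]
    linarith
  · rw [intervalIntegral.integral_undef hi]
    positivity
end
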